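/- Let f, g : (0,∞) → ℝ be standard-type functions with f(0) := lim_{t→0+} f(t) > 0 and g(0) := lim_{t→0+} g(t) > 0. Let D = diag(λ₁,…,λₙ) be a diagonal density matrix with all λᵢ > 0, and let A₁, A₂, …, A_m be self-adjoint n×n complex matrices. Then det([qCov^g_D(Aᵢ,Aⱼ)]_{i,j=1}^m) ≥ det([f(0)·g(0)·γ^f_D([D,Aᵢ],[D,Aⱼ])]_{i,j=1}^m). -/

import Mathlib

open scoped BigOperators ComplexConjugate

noncomputable section

/-- A standard-type function: continuous, non-decreasing and concave on `(0,∞)`,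
positive, with `f 1 = 1` and the symmetry `f t = t * f (1/t)`. -/
def StandardType (f : ℝ → ℝ) : Prop :=
  ContinuousOn f (Set.Ioi 0) ∧ MonotoneOn f (Set.Ioi 0) ∧
  ConcaveOn ℝ (Set.Ioi 0) f ∧ (∀ t : ℝ, 0 < t → 0 < f t) ∧
  f 1 = 1 ∧ ∀ t : ℝ, 0 < t → f t = t * f (1 / t)

/-- The mean associated to `f`: `M_f(a,b) = b * f (a/b)`. -/
def Mmean (f : ℝ → ℝ) (a b : ℝ) : ℝ := b * f (a / b)

/-- The quantum `g`-covariance of `A` and `B` with respect to the diagonal density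
matrix with eigenvalues `lam`. -/
def qCovC {n : ℕ} (g : ℝ → ℝ) (lam : Fin n → ℝ)
    (A B : Matrix (Fin n) (Fin n) ℂ) : ℂ :=
  (∑ i, ∑ j, (Mmean g (lam i) (lam j) : ℂ) * conj (A i j) * B i j)
    - (∑ i, (lam i : ℂ) * conj (A i i)) * (∑ i, (lam i : ℂ) * B i i)

/-- The quantum `f`-Fisher-information form evaluated at the commutators
`[D,A]`, `[D,B]`, for the diagonal density matrix `D` with eigenvalues `lam`. -/
def gammaCommC {n : ℕ} (f : ℝ → ℝ) (lam : Fin n → ℝ)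
    (A B : Matrix (Fin n) (Fin n) ℂ) : ℂ :=
  ∑ i, ∑ j, (((lam i - lam j) ^ 2 / Mmean f (lam i) (lam j) : ℝ) : ℂ)
      * conj (A i j) * B i j

/-!
Subtracting its `D`-expectation from each `A k` changes neither form and turns both into weighted
inner products of the matrix entries: the covariance with weights `M_g(λᵢ,λⱼ)`, the scaled Fisher
form with weights `f(0) g(0) (λᵢ-λⱼ)² / M_f(λᵢ,λⱼ)`. A symmetric `f ≥ f(0)` satisfies
`f(0) max(a,b) ≤ M_f(a,b)`, and `(a-b)² ≤ max(a,b)²`, so the covariance has the larger weights.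
Its Gram matrix therefore dominates the other in the Loewner order, on which the determinant is
monotone over positive semidefinite matrices.
-/

section LoewnerOrder

open scoped MatrixOrder ComplexOrder

variable {𝕜 ι : Type*} [RCLike 𝕜] [Fintype ι] [DecidableEq ι] {A B : Matrix ι ι 𝕜}

theorem one_le_det_of_one_le (hA : 1 ≤ A) : 1 ≤ A.det := by
  have hA_herm : A.IsHermitian :=
    (Matrix.nonneg_iff_posSemidef.mp (zero_le_one.trans hA)).isHermitian
  have h_eig (i : ι) : 1 ≤ hA_herm.eigenvalues i :=
    (CFC.one_le_iff (R := ℝ) A hA_herm).mp hA _ (hA_herm.eigenvalues_mem_spectrum_real i)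
  rw [hA_herm.det_eq_prod_eigenvalues]
  exact_mod_cast Finset.one_le_prod fun i _ ↦ h_eig i

theorem det_le_det_of_nonneg_of_le (hA : 0 ≤ A) (hAB : A ≤ B) : A.det ≤ B.det := by
  have hA_psd : A.PosSemidef := Matrix.nonneg_iff_posSemidef.mp hA
  by_cases h_det : A.det = 0
  · exact h_det ▸ (Matrix.nonneg_iff_posSemidef.mp (hA.trans hAB)).det_nonneg
  have hA_pos : IsStrictlyPositive A :=
    (hA_psd.posDef_iff_det_ne_zero.mpr h_det).isStrictlyPositive
  obtain ⟨M, hM, hA_eq⟩ := CStarAlgebra.isStrictlyPositive_iff_eq_star_mul_self.mp hA_pos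
  obtain ⟨N, hMN⟩ := hM.exists_right_inv
  have hN : star N * A * N = 1 := by
    rw [hA_eq, ← mul_assoc, ← star_mul, hMN, mul_assoc, hMN, star_one, one_mul]
  have h_one_le : 1 ≤ (star N * B * N).det :=
    one_le_det_of_one_le (hN ▸ star_left_conjugate_le_conjugate hAB N)
  calc A.det ≤ A.det * (star N * B * N).det :=
        le_mul_of_one_le_right hA_psd.det_nonneg h_one_le
    _ = (star N * A * N).det * B.det := by simp only [Matrix.det_mul]; ring
    _ = B.det := by rw [hN, Matrix.det_one, one_mul]

end LoewnerOrder

section WeightedGram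

open scoped MatrixOrder ComplexOrder InnerProductSpace
open RCLike

variable {𝕜 α ι : Type*} {E : α → Type*} [RCLike 𝕜] [Fintype α]
  [∀ a, SeminormedAddCommGroup (E a)] [∀ a, InnerProductSpace 𝕜 (E a)] {v w : α → ℝ}

theorem posSemidef_wInner [Finite ι] (hw : 0 ≤ w) (x : ι → ∀ a, E a) :
    (Matrix.of fun k l ↦ ⟪x k, x l⟫_[𝕜, w]).PosSemidef := by
  have h_sum : (Matrix.of fun k l ↦ ⟪x k, x l⟫_[𝕜, w]) =
      ∑ a, w a • Matrix.gram 𝕜 fun k ↦ x k a := by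
    ext k l
    simp only [Matrix.of_apply, wInner, Matrix.sum_apply, Matrix.smul_apply, Matrix.gram_apply]
  rw [h_sum]
  exact Matrix.posSemidef_sum _ fun a _ ↦ (Matrix.posSemidef_gram 𝕜 _).smul (hw a)

theorem det_wInner_mono [Fintype ι] [DecidableEq ι] (hv : 0 ≤ v) (hvw : v ≤ w)
    (x : ι → ∀ a, E a) :
    (Matrix.of fun k l ↦ ⟪x k, x l⟫_[𝕜, v]).det ≤
      (Matrix.of fun k l ↦ ⟪x k, x l⟫_[𝕜, w]).det := by
  refine det_le_det_of_nonneg_of_le (posSemidef_wInner hv x).nonneg (Matrix.le_iff.mpr ?_)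
  convert posSemidef_wInner (𝕜 := 𝕜) (sub_nonneg.mpr hvw) x using 1
  ext k l
  simp only [Matrix.sub_apply, Matrix.of_apply, wInner, Pi.sub_apply, sub_smul,
    Finset.sum_sub_distrib]

end WeightedGram

theorem le_of_tendsto_nhdsGT_of_monotoneOn {α β : Type*} [LinearOrder α] [TopologicalSpace α]
    [OrderTopology α] [DenselyOrdered α] [Preorder β] [TopologicalSpace β] [ClosedIicTopology β]
    {f : α → β} {a b : α} {c : β} (hf : MonotoneOn f (Set.Ioi a))
    (hc : Filter.Tendsto f (nhdsWithin a (Set.Ioi a)) (nhds c)) (hab : a < b) : c ≤ f b := by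
  have : (nhdsWithin a (Set.Ioi a)).NeBot := nhdsGT_neBot_of_exists_gt ⟨b, hab⟩
  refine le_of_tendsto hc ?_
  filter_upwards [Ioo_mem_nhdsGT hab] with t ht
  exact hf ht.1 hab ht.2.le

theorem sq_sub_le_sq_max {R : Type*} [CommRing R] [LinearOrder R] [IsStrictOrderedRing R]
    {a b : R} (ha : 0 ≤ a) (hb : 0 ≤ b) : (a - b) ^ 2 ≤ max a b ^ 2 := by
  have h_left : a ≤ max a b := le_max_left a b
  have h_right : b ≤ max a b := le_max_right a b
  exact sq_le_sq' (by linarith) (by linarith)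

section Mean

variable {f g : ℝ → ℝ} {a b c d : ℝ}

theorem Mmean_self (hf : f 1 = 1) (ha : a ≠ 0) : Mmean f a a = a := by
  rw [Mmean, div_self ha, hf, mul_one]

theorem Mmean_comm (hf : ∀ t, 0 < t → f t = t * f (1 / t)) (ha : 0 < a) (hb : 0 < b) :
    Mmean f a b = Mmean f b a := by
  rw [Mmean, Mmean, hf (a / b) (div_pos ha hb), one_div_div, ← mul_assoc,
    mul_div_cancel₀ a hb.ne']

theorem mul_right_le_Mmean (hc : ∀ t, 0 < t → c ≤ f t) (ha : 0 < a) (hb : 0 < b) :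
    c * b ≤ Mmean f a b := by
  rw [mul_comm]
  exact mul_le_mul_of_nonneg_left (hc _ (div_pos ha hb)) hb.le

theorem mul_max_le_Mmean (hf : ∀ t, 0 < t → f t = t * f (1 / t))
    (hc : ∀ t, 0 < t → c ≤ f t) (ha : 0 < a) (hb : 0 < b) :
    c * max a b ≤ Mmean f a b := by
  rcases max_choice a b with h | h <;> rw [h]
  · exact Mmean_comm hf ha hb ▸ mul_right_le_Mmean hc hb ha
  · exact mul_right_le_Mmean hc ha hb

theorem mul_sq_sub_div_Mmean_nonneg (hc : ∀ t, 0 < t → c ≤ f t) (hc0 : 0 ≤ c) (hd0 : 0 ≤ d)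
    (ha : 0 < a) (hb : 0 < b) : 0 ≤ c * d * ((a - b) ^ 2 / Mmean f a b) := by
  have hM : 0 ≤ Mmean f a b := (mul_nonneg hc0 hb.le).trans (mul_right_le_Mmean hc ha hb)
  positivity

theorem mul_sq_sub_div_Mmean_le_Mmean (hf : ∀ t, 0 < t → f t = t * f (1 / t))
    (hg : ∀ t, 0 < t → g t = t * g (1 / t)) (hc : ∀ t, 0 < t → c ≤ f t)
    (hd : ∀ t, 0 < t → d ≤ g t) (hc0 : 0 < c) (hd0 : 0 ≤ d) (ha : 0 < a) (hb : 0 < b) :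
    c * d * ((a - b) ^ 2 / Mmean f a b) ≤ Mmean g a b := by
  have h_max : 0 < max a b := lt_max_of_lt_left ha
  have hMf : c * max a b ≤ Mmean f a b := mul_max_le_Mmean hf hc ha hb
  have hMg : d * max a b ≤ Mmean g a b := mul_max_le_Mmean hg hd ha hb
  rw [← mul_div_assoc, div_le_iff₀ ((mul_pos hc0 h_max).trans_le hMf)]
  calc c * d * (a - b) ^ 2 ≤ c * d * max a b ^ 2 :=
        mul_le_mul_of_nonneg_left (sq_sub_le_sq_max ha.le hb.le) (mul_nonneg hc0.le hd0)
    _ = d * max a b * (c * max a b) := by ring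
    _ ≤ Mmean g a b * Mmean f a b :=
        mul_le_mul hMg hMf (by positivity) ((mul_nonneg hd0 h_max.le).trans hMg)

end Mean

section Centered

open scoped InnerProductSpace
open Function RCLike

variable {n : ℕ} {g : ℝ → ℝ} {lam : Fin n → ℝ}

/-- The weights `M_g(λᵢ,λⱼ)` of the covariance form on matrix entries. -/
def meanWeight (g : ℝ → ℝ) (lam : Fin n → ℝ) (p : Fin n × Fin n) : ℝ :=
  Mmean g (lam p.1) (lam p.2)

/-- The weights `(λᵢ-λⱼ)² / M_f(λᵢ,λⱼ)` of the Fisher-information form on matrix entries. -/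
def fisherWeight (f : ℝ → ℝ) (lam : Fin n → ℝ) (p : Fin n × Fin n) : ℝ :=
  (lam p.1 - lam p.2) ^ 2 / Mmean f (lam p.1) (lam p.2)

/-- The expectation `Tr(D A)` of `A` in the state `D = diag(lam)`. -/
def expectation (lam : Fin n → ℝ) (A : Matrix (Fin n) (Fin n) ℂ) : ℂ :=
  ∑ i, (lam i : ℂ) * A i i

/-- The centred observable `A - Tr(D A) • 1` of the state `D = diag(lam)`. -/
def centered (lam : Fin n → ℝ) (A : Matrix (Fin n) (Fin n) ℂ) : Matrix (Fin n) (Fin n) ℂ :=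
  A - expectation lam A • (1 : Matrix (Fin n) (Fin n) ℂ)

theorem centered_apply_of_ne (A : Matrix (Fin n) (Fin n) ℂ) {i j : Fin n} (hij : i ≠ j) :
    centered lam A i j = A i j := by
  simp only [centered, Matrix.sub_apply, Matrix.smul_apply, Matrix.one_apply_ne hij, smul_zero,
    sub_zero]

theorem wInner_uncurry {κ μ : Type*} [Fintype κ] [Fintype μ] (w : κ × μ → ℝ)
    (A B : Matrix κ μ ℂ) :
    ⟪uncurry A, uncurry B⟫_[ℂ, w] = ∑ i, ∑ j, (w (i, j) : ℂ) * conj (A i j) * B i j := by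
  rw [wInner, Fintype.sum_prod_type]
  refine Finset.sum_congr rfl fun i _ ↦ Finset.sum_congr rfl fun j _ ↦ ?_
  rw [RCLike.inner_apply', Complex.real_smul, mul_assoc]
  rfl

theorem re_wInner {α : Type*} [Fintype α] (w : α → ℝ) (x y : α → ℂ) :
    (⟪x, y⟫_[ℂ, w]).re = ⟪x, y⟫_[ℝ, w] := by
  simp only [wInner, Complex.re_sum, Complex.smul_re, RCLike.inner_apply, Complex.inner,
    smul_eq_mul]

theorem wInner_meanWeight_one_left (hg : g 1 = 1) (hlam : ∀ i, lam i ≠ 0)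
    (A : Matrix (Fin n) (Fin n) ℂ) :
    ⟪uncurry (1 : Matrix (Fin n) (Fin n) ℂ), uncurry A⟫_[ℂ, meanWeight g lam] =
      expectation lam A := by
  simp [wInner_uncurry, meanWeight, expectation, Matrix.one_apply, Mmean_self hg (hlam _)]

theorem expectation_one (hsum : ∑ i, lam i = 1) :
    expectation lam (1 : Matrix (Fin n) (Fin n) ℂ) = 1 := by
  simp only [expectation, Matrix.one_apply_eq, mul_one]
  exact_mod_cast hsum

theorem qCovC_eq_wInner_sub (g : ℝ → ℝ) (lam : Fin n → ℝ) (A B : Matrix (Fin n) (Fin n) ℂ) :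
    qCovC g lam A B = ⟪uncurry A, uncurry B⟫_[ℂ, meanWeight g lam] -
      conj (expectation lam A) * expectation lam B := by
  simp only [qCovC, expectation, wInner_uncurry, meanWeight, map_sum, map_mul, Complex.conj_ofReal]

theorem qCovC_eq_wInner_centered (hg : g 1 = 1) (hlam : ∀ i, lam i ≠ 0) (hsum : ∑ i, lam i = 1)
    (A B : Matrix (Fin n) (Fin n) ℂ) :
    qCovC g lam A B =
      ⟪uncurry (centered lam A), uncurry (centered lam B)⟫_[ℂ, meanWeight g lam] := by
  have h_centered (C : Matrix (Fin n) (Fin n) ℂ) : uncurry (centered lam C) =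
      uncurry C - expectation lam C • uncurry (1 : Matrix (Fin n) (Fin n) ℂ) := rfl
  have h_one_left := wInner_meanWeight_one_left (g := g) hg hlam
  have h_one_right (C : Matrix (Fin n) (Fin n) ℂ) :
      ⟪uncurry C, uncurry (1 : Matrix (Fin n) (Fin n) ℂ)⟫_[ℂ, meanWeight g lam] =
        conj (expectation lam C) := by
    rw [← conj_wInner_symm, h_one_left]
  simp only [qCovC_eq_wInner_sub, h_centered, wInner_sub_left, wInner_sub_right,
    wInner_smul_left, wInner_smul_right, h_one_left, h_one_right, expectation_one hsum,
    smul_eq_mul, starRingEnd_apply]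
  ring

theorem gammaCommC_eq_wInner_centered (f : ℝ → ℝ) (lam : Fin n → ℝ)
    (A B : Matrix (Fin n) (Fin n) ℂ) :
    gammaCommC f lam A B =
      ⟪uncurry (centered lam A), uncurry (centered lam B)⟫_[ℂ, fisherWeight f lam] := by
  rw [gammaCommC, wInner_uncurry]
  refine Finset.sum_congr rfl fun i _ ↦ Finset.sum_congr rfl fun j _ ↦ ?_
  rcases eq_or_ne i j with rfl | hij
  · simp [fisherWeight]
  · rw [centered_apply_of_ne A hij, centered_apply_of_ne B hij, fisherWeight]

theorem mul_re_gammaCommC_eq_wInner_centered (c : ℝ) (f : ℝ → ℝ) (lam : Fin n → ℝ)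
    (A B : Matrix (Fin n) (Fin n) ℂ) :
    c * (gammaCommC f lam A B).re =
      ⟪uncurry (centered lam A), uncurry (centered lam B)⟫_[ℝ, c • fisherWeight f lam] := by
  rw [gammaCommC_eq_wInner_centered, re_wInner]
  simp only [wInner, Pi.smul_apply, smul_eq_mul, Finset.mul_sum, mul_assoc]

end Centered

theorem det_qCov_ge_det_f0_g0_gammaComm_general
    {ι : Type*} [Fintype ι] [DecidableEq ι] {n : ℕ} {f g : ℝ → ℝ}
    (hf_symm : ∀ t, 0 < t → f t = t * f (1 / t))
    (hg_symm : ∀ t, 0 < t → g t = t * g (1 / t)) (hg_one : g 1 = 1)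
    {c d : ℝ} (hf : ∀ t, 0 < t → c ≤ f t) (hg : ∀ t, 0 < t → d ≤ g t) (hc : 0 < c) (hd : 0 ≤ d)
    {lam : Fin n → ℝ} (hlam : ∀ i, 0 < lam i) (hsum : ∑ i, lam i = 1)
    (A : ι → Matrix (Fin n) (Fin n) ℂ) :
    Matrix.det (Matrix.of fun i j ↦ (qCovC g lam (A i) (A j)).re) ≥
      Matrix.det (Matrix.of fun i j ↦ c * d * (gammaCommC f lam (A i) (A j)).re) := by
  have h_nonneg : 0 ≤ (c * d) • fisherWeight f lam := fun p ↦
    mul_sq_sub_div_Mmean_nonneg hf hc.le hd (hlam p.1) (hlam p.2)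
  have h_le : (c * d) • fisherWeight f lam ≤ meanWeight g lam := fun p ↦
    mul_sq_sub_div_Mmean_le_Mmean hf_symm hg_symm hf hg hc hd (hlam p.1) (hlam p.2)
  simp only [qCovC_eq_wInner_centered hg_one (fun i ↦ (hlam i).ne') hsum, re_wInner,
    mul_re_gammaCommC_eq_wInner_centered]
  exact det_wInner_mono h_nonneg h_le fun k ↦ Function.uncurry (centered lam (A k))

theorem det_qCov_ge_det_f0_g0_gammaComm
    {n m : ℕ} (f g : ℝ → ℝ) (hf : StandardType f) (hg : StandardType g)
    (f0 g0 : ℝ)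
    (hf0 : Filter.Tendsto f (nhdsWithin 0 (Set.Ioi 0)) (nhds f0))
    (hg0 : Filter.Tendsto g (nhdsWithin 0 (Set.Ioi 0)) (nhds g0))
    (hf0pos : 0 < f0) (hg0pos : 0 < g0)
    (lam : Fin n → ℝ) (hlam : ∀ i, 0 < lam i) (hsum : ∑ i, lam i = 1)
    (A : Fin m → Matrix (Fin n) (Fin n) ℂ) (hA : ∀ k, (A k).IsHermitian) :
    Matrix.det (Matrix.of fun i j => (qCovC g lam (A i) (A j)).re) ≥
      Matrix.det (Matrix.of fun i j => f0 * g0 * (gammaCommC f lam (A i) (A j)).re) :=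
  det_qCov_ge_det_f0_g0_gammaComm_general hf.2.2.2.2.2 hg.2.2.2.2.2 hg.2.2.2.2.1
    (fun _ ↦ le_of_tendsto_nhdsGT_of_monotoneOn hf.2.1 hf0)
    (fun _ ↦ le_of_tendsto_nhdsGT_of_monotoneOn hg.2.1 hg0)
    hf0pos hg0pos.le hlam hsum A
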